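/- arXiv:2511.08097 — 2 statements merged into one kernel-verified Lean document; each statement's English description precedes it below -/
import Mathlib

section
/- For every stationary randomized policy π respecting the budget constraint and every initial joint state s₀ = (s₁,…,s_N), the long-run average reward is bounded by the gain: limsup_{T→∞} (1/T)·E_π[ ∑_{t=0}^{T−1} (1/N)∑_{n=1}^N r_n(S_n(t),A_n(t)) | S(0)=s₀ ] ≤ g*. -/
open Finset Filter

section RMAB

variable {N : ℕ} {S : Fin N → Type} [∀ n, Fintype (S n)] [∀ n, DecidableEq (S n)]

/-- A state-action vector on a finite state space: nonnegative entries summing to one. -/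
def IsSA {σ : Type} [Fintype σ] (y : σ → Bool → ℝ) : Prop :=
  (∀ s a, 0 ≤ y s a) ∧ (∑ s, (y s false + y s true)) = 1

/-- A probability vector on a finite state space. -/
def IsProbVec {σ : Type} [Fintype σ] (x : σ → ℝ) : Prop :=
  (∀ s, 0 ≤ x s) ∧ (∑ s, x s) = 1

/-- A row-stochastic matrix. -/
def RowStochastic {σ : Type} [Fintype σ] (P : σ → σ → ℝ) : Prop :=
  (∀ s s', 0 ≤ P s s') ∧ ∀ s, (∑ s', P s s') = 1

/-- The next-state row vector `y₀·P⁰ + y₁·P¹`. -/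
noncomputable def nextVec {σ : Type} [Fintype σ] (P : Bool → σ → σ → ℝ) (y : σ → Bool → ℝ) (s' : σ) : ℝ :=
  ∑ s, (y s false * P false s s' + y s true * P true s s')

/-- Budget feasibility of a concatenation of state-action vectors: `∑ₙ ‖y⁽ⁿ⁾₁‖₁ ≤ Nα`. -/
def BudgetFeasible (α : ℝ) (y : ∀ n, S n → Bool → ℝ) : Prop :=
  (∑ n, ∑ s, y n s true) ≤ (N : ℝ) * α

/-- The normalized reward `(1/N)∑ₙ∑ₛₐ rₙ(s,a)·y⁽ⁿ⁾(s,a)`. -/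
noncomputable def lpReward (r : ∀ n, S n → Bool → ℝ) (y : ∀ n, S n → Bool → ℝ) : ℝ :=
  (1 / (N : ℝ)) * ∑ n, ∑ s, (r n s false * y n s false + r n s true * y n s true)

/-- Feasibility for the relaxed fixed-point LP. -/
def FPFeasible (P : ∀ n, Bool → S n → S n → ℝ) (α : ℝ) (y : ∀ n, S n → Bool → ℝ) : Prop :=
  (∀ n, IsSA (y n)) ∧ BudgetFeasible α y ∧
    ∀ n s', y n s' false + y n s' true = nextVec (P n) (y n) s'

/-- The gain `g*`: optimal value of the relaxed fixed-point LP. -/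
noncomputable def gain (P : ∀ n, Bool → S n → S n → ℝ) (r : ∀ n, S n → Bool → ℝ)
    (α : ℝ) : ℝ :=
  sSup {v | ∃ y : ∀ n, S n → Bool → ℝ, FPFeasible P α y ∧ v = lpReward r y}

/-- A dissipative multiplier. -/
def Dissipative (P : ∀ n, Bool → S n → S n → ℝ) (r : ∀ n, S n → Bool → ℝ) (α : ℝ)
    (μ : ∀ n, S n → ℝ) : Prop :=
  ∀ y : ∀ n, S n → Bool → ℝ, (∀ n, IsSA (y n)) → BudgetFeasible α y →
    lpReward r y - gain P r α ≤
      (1 / (N : ℝ)) * ∑ n, ∑ s, μ n s * ((y n s false + y n s true) - nextVec (P n) (y n) s)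

/-- The `k`-step kernel `P^{a₁}⋯P^{a_k}` for a word of actions. -/
noncomputable def wordKernel {σ : Type} [Fintype σ] [DecidableEq σ] (P : Bool → σ → σ → ℝ) :
    List Bool → σ → σ → ℝ
  | [], s, s' => if s = s' then 1 else 0
  | a :: w, s, s' => ∑ s'', P a s s'' * wordKernel P w s'' s'

/-- The ergodicity coefficient `ρ_k`. -/
noncomputable def ergCoef (P : ∀ n, Bool → S n → S n → ℝ) (k : ℕ) : ℝ :=
  sInf {v | ∃ (n : Fin N) (s s' : S n) (w : List Bool), w.length = k ∧
    v = ∑ s'', min (wordKernel (P n) w s s'')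
      (wordKernel (P n) (List.replicate k false) s' s'')}

/-- The sup-norm `max_{n,s} |μ⁽ⁿ⁾(s)|` of a terminal vector. -/
noncomputable def supNorm (μ : ∀ n, S n → ℝ) : ℝ :=
  sSup {v | ∃ (n : Fin N) (s : S n), v = |μ n s|}

/-- The finite-horizon LP value `V_τ^μ(x)`. -/
noncomputable def Vfin (P : ∀ n, Bool → S n → S n → ℝ) (r : ∀ n, S n → Bool → ℝ) (α : ℝ)
    (μ : ∀ n, S n → ℝ) (τ : ℕ) (x : ∀ n, S n → ℝ) : ℝ :=
  sSup {v | ∃ y : ℕ → ∀ n, S n → Bool → ℝ,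
    (∀ t, t ≤ τ → ∀ n, IsSA (y t n)) ∧
    (∀ n s, y 0 n s false + y 0 n s true = x n s) ∧
    (∀ t, t < τ → ∀ n s',
      y (t + 1) n s' false + y (t + 1) n s' true = nextVec (P n) (y t n) s') ∧
    (∀ t, t ≤ τ → BudgetFeasible α (y t)) ∧
    v = (∑ t ∈ Finset.range τ, lpReward r (y t)) +
      (1 / (N : ℝ)) * ∑ n, ∑ s, μ n s * (y τ n s false + y τ n s true)}

/-- A stationary randomized policy respecting the budget constraint. -/
def IsPolicy (α : ℝ) (π : (∀ n, S n) → (Fin N → Bool) → ℝ) : Prop :=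
  ∀ s : ∀ n, S n, (∀ a, 0 ≤ π s a) ∧ (∑ a : Fin N → Bool, π s a) = 1 ∧
    ∀ a : Fin N → Bool, π s a ≠ 0 → (∑ n, (if a n then (1 : ℝ) else 0)) ≤ α * N

/-- Distribution of the joint state at time `t` under policy `π` started from `s₀`. -/
noncomputable def stateDist (P : ∀ n, Bool → S n → S n → ℝ)
    (π : (∀ n, S n) → (Fin N → Bool) → ℝ) (s₀ : ∀ n, S n) : ℕ → (∀ n, S n) → ℝ
  | 0, s => if s = s₀ then 1 else 0
  | t + 1, s' => ∑ s : ∀ n, S n, ∑ a : Fin N → Bool,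
      stateDist P π s₀ t s * π s a * ∏ n, P n (a n) (s n) (s' n)

/-- The normalized stage reward `(1/N)∑ₙ rₙ(sₙ,aₙ)`. -/
noncomputable def stageReward (r : ∀ n, S n → Bool → ℝ) (s : ∀ n, S n) (a : Fin N → Bool) : ℝ :=
  (1 / (N : ℝ)) * ∑ n, r n (s n) (a n)

/-- Expected stage reward at time `t` under policy `π` started from `s₀`. -/
noncomputable def expStageReward (P : ∀ n, Bool → S n → S n → ℝ)
    (r : ∀ n, S n → Bool → ℝ) (π : (∀ n, S n) → (Fin N → Bool) → ℝ)
    (s₀ : ∀ n, S n) (t : ℕ) : ℝ :=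
  ∑ s : ∀ n, S n, stateDist P π s₀ t s * ∑ a : Fin N → Bool, π s a * stageReward r s a

/-- The Lagrangian `L_τ^μ(x,λ)` of the finite-horizon LP (budget constraints dualized). -/
noncomputable def Lag (P : ∀ n, Bool → S n → S n → ℝ) (r : ∀ n, S n → Bool → ℝ) (α : ℝ)
    (μ : ∀ n, S n → ℝ) (τ : ℕ) (x : ∀ n, S n → ℝ) (lam : ℕ → ℝ) : ℝ :=
  sSup {v | ∃ y : ℕ → ∀ n, S n → Bool → ℝ,
    (∀ t, t ≤ τ → ∀ n, IsSA (y t n)) ∧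
    (∀ n s, y 0 n s false + y 0 n s true = x n s) ∧
    (∀ t, t < τ → ∀ n s',
      y (t + 1) n s' false + y (t + 1) n s' true = nextVec (P n) (y t n) s') ∧
    v = (∑ t ∈ Finset.range τ,
        (lpReward r (y t) + lam t * (α - (1 / (N : ℝ)) * ∑ n, ∑ s, y t n s true))) +
      (1 / (N : ℝ)) * ∑ n, ∑ s, μ n s * (y τ n s false + y τ n s true)}

/-- The per-arm value `Vₙ^τ(x⁽ⁿ⁾,λ)`. -/
noncomputable def Varm (P : ∀ n, Bool → S n → S n → ℝ) (r : ∀ n, S n → Bool → ℝ)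
    (μ : ∀ n, S n → ℝ) (n : Fin N) (τ : ℕ) (xn : S n → ℝ) (lam : ℕ → ℝ) : ℝ :=
  sSup {v | ∃ z : ℕ → S n → Bool → ℝ,
    (∀ t, t ≤ τ → IsSA (z t)) ∧
    (∀ s, z 0 s false + z 0 s true = xn s) ∧
    (∀ t, t < τ → ∀ s', z (t + 1) s' false + z (t + 1) s' true = nextVec (P n) (z t) s') ∧
    v = (∑ t ∈ Finset.range τ,
        ((∑ s, (r n s false * z t s false + r n s true * z t s true)) -
          lam t * ∑ s, z t s true)) +
      ∑ s, μ n s * (z τ s false + z τ s true)}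

/-- One-hot encoding of a joint state as a tuple of probability vectors. -/
noncomputable def oneHot (s : ∀ n, S n) : ∀ n, S n → ℝ := fun n s' => if s' = s n then 1 else 0

end RMAB

/-!
The occupation measures `y_t⁽ⁿ⁾(s, a) = ℙ(S_n(t) = s, A_n(t) = a)` of a policy form a trajectory of
the LP relaxation: each `y_t` is a budget-feasible tuple of state-action vectors, and the state
marginal of `y_{t+1}` is the next-state vector of `y_t`. The averages over `t < T` stay in the
compact convex set of budget-feasible tuples and violate the fixed-point equation only by a
telescoping term of order `1 / T`. Hence each of their cluster points is feasible for the
fixed-point LP. The reward is linear, so the average reward is the reward of the average, and by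
continuity its limsup is at most the value of the LP.
-/

section ClusterPoints

theorem limsup_le_of_forall_mapClusterPt_le {X ι β : Type*} [TopologicalSpace X]
    [ConditionallyCompleteLinearOrder β] [DenselyOrdered β] [TopologicalSpace β] [OrderTopology β]
    {l : Filter ι} [l.NeBot] {K : Set X} (hK : IsCompact K) {u : ι → X}
    (hu : ∀ᶠ i in l, u i ∈ K) {f : X → β} (hf : Continuous f) {c : β}
    (hc : ∀ x ∈ K, MapClusterPt x l u → f x ≤ c) :
    limsup (fun i => f (u i)) l ≤ c := by
  have : Nonempty β := ⟨c⟩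
  obtain ⟨m, hm⟩ := hK.bddBelow_image hf.continuousOn
  have hbelow : ∀ᶠ i in l, m ≤ f (u i) := hu.mono fun i hi => hm (Set.mem_image_of_mem f hi)
  have hcobdd : l.IsCoboundedUnder (· ≤ ·) fun i => f (u i) :=
    IsBoundedUnder.isCoboundedUnder_le ⟨m, hbelow⟩
  refine le_of_forall_gt_imp_ge_of_dense fun b hb => limsup_le_of_le hcobdd ?_
  by_contra hfreq
  have hmem : ∃ᶠ i in l, u i ∈ K ∩ f ⁻¹' Set.Ici b :=
    ((not_eventually.1 hfreq).and_eventually hu).mono fun i hi => ⟨hi.2, (not_le.1 hi.1).le⟩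
  obtain ⟨x, hx, hclus⟩ :=
    (hK.inter_right (isClosed_Ici.preimage hf)).exists_mapClusterPt_of_frequently hmem
  exact (hc x hx.1 hclus).not_gt (hb.trans_le hx.2)

end ClusterPoints

section TimeAverage

/-- The average `(1/T) ∑_{t<T} u t` of the first `T` terms of a sequence of vectors. It is the junk
value `0` at `T = 0`. -/
noncomputable def timeAverage {E : Type*} [AddCommMonoid E] [Module ℝ E] (u : ℕ → E) (T : ℕ) : E :=
  (1 / (T : ℝ)) • ∑ t ∈ range T, u t

theorem map_timeAverage {E F : Type*} [AddCommMonoid E] [Module ℝ E] [AddCommMonoid F]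
    [Module ℝ F] (L : E →ₗ[ℝ] F) (u : ℕ → E) (T : ℕ) :
    L (timeAverage u T) = timeAverage (fun t => L (u t)) T := by
  simp only [timeAverage, map_smul, map_sum]

theorem timeAverage_mem_of_convex {E : Type*} [AddCommGroup E] [Module ℝ E] {C : Set E}
    (hC : Convex ℝ C) {u : ℕ → E} (hu : ∀ t, u t ∈ C) {T : ℕ} (hT : T ≠ 0) :
    timeAverage u T ∈ C := by
  rw [timeAverage, smul_sum]
  refine hC.sum_mem (fun _ _ => by positivity) ?_ fun t _ => hu t
  simp [hT]

theorem timeAverage_sub_succ {E : Type*} [AddCommGroup E] [Module ℝ E] (v : ℕ → E) (T : ℕ) :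
    timeAverage (fun t => v t - v (t + 1)) T = (1 / (T : ℝ)) • (v 0 - v T) := by
  rw [timeAverage, sum_range_sub']

theorem tendsto_timeAverage_sub_succ {E : Type*} [NormedAddCommGroup E] [NormedSpace ℝ E]
    {v : ℕ → E} (hv : Bornology.IsBounded (Set.range v)) :
    Tendsto (timeAverage fun t => v t - v (t + 1)) atTop (nhds 0) := by
  obtain ⟨C, hC⟩ := hv.exists_norm_le
  have hbdd : IsBoundedUnder (· ≤ ·) atTop fun T => ‖v 0 - v T‖ :=
    isBoundedUnder_of ⟨C + C, fun T =>
      norm_sub_le_of_le (hC _ (Set.mem_range_self 0)) (hC _ (Set.mem_range_self T))⟩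
  rw [funext (timeAverage_sub_succ v)]
  exact tendsto_one_div_atTop_nhds_zero_nat.zero_smul_isBoundedUnder_le hbdd

end TimeAverage

section StateActionVectors

variable {σ : Type} [Fintype σ]

theorem isSA_iff_uncurry_mem_stdSimplex {y : σ → Bool → ℝ} :
    IsSA y ↔ Function.uncurry y ∈ stdSimplex ℝ (σ × Bool) := by
  simp only [IsSA, stdSimplex, Set.mem_ofPred_eq, Prod.forall, Fintype.sum_prod_type,
    Fintype.sum_bool, Function.uncurry_apply_pair, add_comm]

theorem convex_setOf_isSA : Convex ℝ {y : σ → Bool → ℝ | IsSA y} := by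
  simp only [isSA_iff_uncurry_mem_stdSimplex]
  exact (convex_stdSimplex ℝ (σ × Bool)).linear_preimage
    (LinearEquiv.curry ℝ ℝ σ Bool).symm.toLinearMap

theorem isCompact_setOf_isSA : IsCompact {y : σ → Bool → ℝ | IsSA y} := by
  have himage : {y : σ → Bool → ℝ | IsSA y} = Function.curry '' stdSimplex ℝ (σ × Bool) := by
    ext y
    rw [Set.mem_ofPred_eq, isSA_iff_uncurry_mem_stdSimplex]
    exact ⟨fun hy => ⟨_, hy, Function.curry_uncurry y⟩, by rintro ⟨z, hz, rfl⟩; exact hz⟩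
  rw [himage]
  exact (isCompact_stdSimplex ℝ (σ × Bool)).image (by unfold Function.curry; fun_prop)

end StateActionVectors

section RelaxedProgram

variable {N : ℕ} {S : Fin N → Type}

/-- The tuple of state marginals `y⁽ⁿ⁾₀ + y⁽ⁿ⁾₁`, as a linear map. -/
def stateMarginal : (∀ n, S n → Bool → ℝ) →ₗ[ℝ] ∀ n, S n → ℝ where
  toFun y n s := y n s false + y n s true
  map_add' y z := by ext; simp only [Pi.add_apply]; ring
  map_smul' c y := by ext; simp only [Pi.smul_apply, smul_eq_mul, RingHom.id_apply]; ring

variable [∀ n, Fintype (S n)]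

/-- The tuple of next-state vectors `y⁽ⁿ⁾₀ P⁰ₙ + y⁽ⁿ⁾₁ P¹ₙ`, as a linear map. -/
noncomputable def nextMarginal (P : ∀ n, Bool → S n → S n → ℝ) :
    (∀ n, S n → Bool → ℝ) →ₗ[ℝ] ∀ n, S n → ℝ where
  toFun y n := nextVec (P n) (y n)
  map_add' y z := by
    ext
    simp only [nextVec, Pi.add_apply, ← sum_add_distrib]
    exact sum_congr rfl fun _ _ => by ring
  map_smul' c y := by
    ext
    simp only [nextVec, Pi.smul_apply, smul_eq_mul, RingHom.id_apply, mul_sum]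
    exact sum_congr rfl fun _ _ => by ring

/-- The objective `lpReward r` of the relaxed LP, as a linear functional. -/
noncomputable def lpRewardLinear (r : ∀ n, S n → Bool → ℝ) :
    (∀ n, S n → Bool → ℝ) →ₗ[ℝ] ℝ where
  toFun := lpReward r
  map_add' y z := by
    simp only [lpReward, Pi.add_apply, ← mul_add, ← sum_add_distrib]
    exact congrArg _ (sum_congr rfl fun _ _ => sum_congr rfl fun _ _ => by ring)
  map_smul' c y := by
    simp only [lpReward, Pi.smul_apply, smul_eq_mul, RingHom.id_apply, mul_left_comm c, mul_sum]
    exact sum_congr rfl fun _ _ => sum_congr rfl fun _ _ => by ring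

theorem continuous_lpReward (r : ∀ n, S n → Bool → ℝ) : Continuous (lpReward r) :=
  (lpRewardLinear r).continuous_of_finiteDimensional

theorem lpReward_timeAverage (r : ∀ n, S n → Bool → ℝ) (y : ℕ → ∀ n, S n → Bool → ℝ) (T : ℕ) :
    lpReward r (timeAverage y T) = timeAverage (fun t => lpReward r (y t)) T :=
  map_timeAverage (lpRewardLinear r) y T

/-- The budget-feasible concatenations of state-action vectors. These are the points satisfying
every constraint of the relaxed LP except the fixed-point equation. -/
def budgetPolytope (S : Fin N → Type) [∀ n, Fintype (S n)] (α : ℝ) :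
    Set (∀ n, S n → Bool → ℝ) :=
  Set.pi Set.univ (fun n => {y : S n → Bool → ℝ | IsSA y}) ∩ {y | BudgetFeasible α y}

theorem convex_budgetPolytope (α : ℝ) : Convex ℝ (budgetPolytope S α) := by
  refine (convex_pi fun n _ => convex_setOf_isSA).inter (convex_halfSpace_le ⟨?_, ?_⟩ _)
  · simp only [Pi.add_apply, sum_add_distrib, implies_true]
  · simp only [Pi.smul_apply, smul_sum, implies_true]

theorem isCompact_budgetPolytope (α : ℝ) : IsCompact (budgetPolytope S α) :=
  (isCompact_univ_pi fun n => isCompact_setOf_isSA).inter_right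
    (isClosed_le (by fun_prop) continuous_const)

/-- The defect `y₀ + y₁ - (y₀ P⁰ + y₁ P¹)` in the fixed-point equation, for all arms at once. -/
noncomputable def flowDefect (P : ∀ n, Bool → S n → S n → ℝ) :
    (∀ n, S n → Bool → ℝ) →ₗ[ℝ] ∀ n, S n → ℝ :=
  stateMarginal - nextMarginal P

theorem fpFeasible_iff {P : ∀ n, Bool → S n → S n → ℝ} {α : ℝ} {y : ∀ n, S n → Bool → ℝ} :
    FPFeasible P α y ↔ y ∈ budgetPolytope S α ∧ flowDefect P y = 0 := by
  simp only [FPFeasible, budgetPolytope, flowDefect, stateMarginal, nextMarginal,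
    LinearMap.sub_apply, LinearMap.coe_mk, AddHom.coe_mk, sub_eq_zero, funext_iff,
    Set.mem_inter_iff, Set.mem_univ_pi, Set.mem_ofPred_eq, and_assoc]

theorem lpReward_le_gain {P : ∀ n, Bool → S n → S n → ℝ} {α : ℝ} (r : ∀ n, S n → Bool → ℝ)
    {y : ∀ n, S n → Bool → ℝ} (hy : FPFeasible P α y) : lpReward r y ≤ gain P r α := by
  have hbdd : BddAbove (lpReward r '' budgetPolytope S α) :=
    (isCompact_budgetPolytope α).bddAbove_image (continuous_lpReward r).continuousOn
  refine le_csSup (hbdd.mono ?_) ⟨y, hy, rfl⟩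
  rintro _ ⟨z, hz, rfl⟩
  exact Set.mem_image_of_mem _ (fpFeasible_iff.1 hz).1

/-- An infinite-horizon trajectory of the relaxed LP: budget-feasible state-action vectors in which
the state marginal at time `t + 1` is produced by the transitions at time `t`. -/
structure IsLPTrajectory (P : ∀ n, Bool → S n → S n → ℝ) (α : ℝ)
    (y : ℕ → ∀ n, S n → Bool → ℝ) : Prop where
  mem_budgetPolytope : ∀ t, y t ∈ budgetPolytope S α
  stateMarginal_succ : ∀ t, stateMarginal (y (t + 1)) = nextMarginal P (y t)

namespace IsLPTrajectory

variable {P : ∀ n, Bool → S n → S n → ℝ} {α : ℝ} {y : ℕ → ∀ n, S n → Bool → ℝ}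

theorem eventually_timeAverage_mem (hy : IsLPTrajectory P α y) :
    ∀ᶠ T in atTop, timeAverage y T ∈ budgetPolytope S α :=
  (eventually_ne_atTop 0).mono fun _ hT =>
    timeAverage_mem_of_convex (convex_budgetPolytope α) hy.mem_budgetPolytope hT

theorem isBounded_range_stateMarginal (hy : IsLPTrajectory P α y) :
    Bornology.IsBounded (Set.range fun t => stateMarginal (y t)) := by
  have hcont : Continuous (stateMarginal (S := S)) :=
    stateMarginal.continuous_of_finiteDimensional
  refine ((isCompact_budgetPolytope α).image hcont).isBounded.subset ?_
  rintro _ ⟨t, rfl⟩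
  exact Set.mem_image_of_mem _ (hy.mem_budgetPolytope t)

theorem tendsto_flowDefect_timeAverage (hy : IsLPTrajectory P α y) :
    Tendsto (fun T => flowDefect P (timeAverage y T)) atTop (nhds 0) := by
  have hdefect (t : ℕ) :
      flowDefect P (y t) = stateMarginal (y t) - stateMarginal (y (t + 1)) := by
    rw [flowDefect, LinearMap.sub_apply, hy.stateMarginal_succ]
  simp only [map_timeAverage, hdefect]
  exact tendsto_timeAverage_sub_succ hy.isBounded_range_stateMarginal

theorem fpFeasible_of_mapClusterPt (hy : IsLPTrajectory P α y) {z : ∀ n, S n → Bool → ℝ}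
    (hz : z ∈ budgetPolytope S α) (hclus : MapClusterPt z atTop (timeAverage y)) :
    FPFeasible P α z := by
  refine fpFeasible_iff.2 ⟨hz, ?_⟩
  have hcont : Continuous (flowDefect P) :=
    LinearMap.continuous_of_finiteDimensional _
  have hdefect : MapClusterPt (flowDefect P z) atTop
      fun T => flowDefect P (timeAverage y T) :=
    hclus.continuousAt_comp hcont.continuousAt
  exact eq_of_nhds_neBot (hdefect.clusterPt.mono hy.tendsto_flowDefect_timeAverage)

theorem limsup_timeAverage_lpReward_le_gain (hy : IsLPTrajectory P α y)
    (r : ∀ n, S n → Bool → ℝ) :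
    limsup (timeAverage fun t => lpReward r (y t)) atTop ≤ gain P r α := by
  rw [← funext (lpReward_timeAverage r y)]
  exact limsup_le_of_forall_mapClusterPt_le (isCompact_budgetPolytope α)
    hy.eventually_timeAverage_mem (continuous_lpReward r) fun z hz hclus =>
      lpReward_le_gain r (hy.fpFeasible_of_mapClusterPt hz hclus)

end IsLPTrajectory

end RelaxedProgram

section ProductKernel

variable {ι R : Type*} [Fintype ι] [CommSemiring R] {X : ι → Type*} [∀ i, Fintype (X i)]

theorem sum_prod_eq_one_of_forall_sum_eq_one [DecidableEq ι] {F : ∀ i, X i → R}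
    (hF : ∀ i, ∑ x, F i x = 1) : ∑ s : ∀ i, X i, ∏ i, F i (s i) = 1 := by
  rw [← Fintype.piFinset_univ, ← prod_univ_sum, Fintype.prod_eq_one _ hF]

theorem sum_prod_mul_apply [DecidableEq ι] {F : ∀ i, X i → R} (hF : ∀ i, ∑ x, F i x = 1) (i : ι)
    (g : X i → R) :
    ∑ s : ∀ j, X j, (∏ j, F j (s j)) * g (s i) = ∑ x, F i x * g x := by
  let G : ∀ j, X j → R := Pi.mulSingle i g
  have hGi : G i = g := Pi.mulSingle_eq_same (M := fun j => X j → R) i g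
  have hGj {j : ι} (hj : j ≠ i) : G j = 1 := Pi.mulSingle_eq_of_ne (M := fun j => X j → R) hj g
  calc
    ∑ s : ∀ j, X j, (∏ j, F j (s j)) * g (s i) = ∑ s : ∀ j, X j, ∏ j, F j (s j) * G j (s j) := by
      refine sum_congr rfl fun s _ => ?_
      rw [prod_mul_distrib, Fintype.prod_eq_single (f := fun j => G j (s j)) i fun j hj => by
        rw [hGj hj, Pi.one_apply], hGi]
    _ = ∏ j, ∑ x, F j x * G j x := by rw [prod_univ_sum, Fintype.piFinset_univ]
    _ = ∑ x, F i x * g x := by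
      rw [Fintype.prod_eq_single i fun j hj => by simp only [hGj hj, Pi.one_apply, mul_one, hF],
        hGi]

end ProductKernel

section Policy

variable {N : ℕ} {S : Fin N → Type} [∀ n, Fintype (S n)] [∀ n, DecidableEq (S n)]
  {P : ∀ n, Bool → S n → S n → ℝ} {π : (∀ n, S n) → (Fin N → Bool) → ℝ} {s₀ : ∀ n, S n} {α : ℝ}

/-- The expectation `E_π[f(S(t), A(t)) | S(0) = s₀]` of a function of the joint state and the action
vector at time `t`. -/
noncomputable def stageExp (P : ∀ n, Bool → S n → S n → ℝ)
    (π : (∀ n, S n) → (Fin N → Bool) → ℝ) (s₀ : ∀ n, S n) (t : ℕ)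
    (f : (∀ n, S n) → (Fin N → Bool) → ℝ) : ℝ :=
  ∑ s, ∑ a, stateDist P π s₀ t s * π s a * f s a

theorem stageExp_sum {κ : Type*} (I : Finset κ) (t : ℕ)
    (f : κ → (∀ n, S n) → (Fin N → Bool) → ℝ) :
    stageExp P π s₀ t (fun s a => ∑ i ∈ I, f i s a) = ∑ i ∈ I, stageExp P π s₀ t (f i) := by
  simp only [stageExp, mul_sum]
  rw [sum_comm_cycle]

theorem stageExp_const_mul (t : ℕ) (c : ℝ) (f : (∀ n, S n) → (Fin N → Bool) → ℝ) :
    stageExp P π s₀ t (fun s a => c * f s a) = c * stageExp P π s₀ t f := by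
  simp only [stageExp, mul_sum, mul_left_comm c]

theorem stageExp_comp_state (hπ : IsPolicy α π) (t : ℕ) (g : (∀ n, S n) → ℝ) :
    stageExp P π s₀ t (fun s _ => g s) = ∑ s, stateDist P π s₀ t s * g s := by
  simp only [stageExp, ← sum_mul, ← mul_sum, (hπ _).2.1, mul_one]

theorem sum_stateDist_succ_mul (t : ℕ) (g : (∀ n, S n) → ℝ) :
    ∑ s', stateDist P π s₀ (t + 1) s' * g s' =
      stageExp P π s₀ t fun s a => ∑ s', (∏ n, P n (a n) (s n) (s' n)) * g s' := by
  rw [stageExp_sum]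
  simp only [stageExp, stateDist, sum_mul, mul_assoc]

theorem isProbVec_stateDist (hP : ∀ n a, RowStochastic (P n a)) (hπ : IsPolicy α π) (t : ℕ) :
    IsProbVec (stateDist P π s₀ t) := by
  induction t with
  | zero => exact ⟨fun s => by simp only [stateDist]; positivity, by simp [stateDist]⟩
  | succ t ih =>
    refine ⟨fun s' => sum_nonneg fun s _ => sum_nonneg fun a _ =>
      mul_nonneg (mul_nonneg (ih.1 s) ((hπ s).1 a)) (prod_nonneg fun n _ => (hP n _).1 _ _), ?_⟩
    have hkernel (s : ∀ n, S n) (a : Fin N → Bool) :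
        ∑ s' : ∀ n, S n, ∏ n, P n (a n) (s n) (s' n) = 1 :=
      sum_prod_eq_one_of_forall_sum_eq_one fun n => (hP n (a n)).2 (s n)
    have hmass := sum_stateDist_succ_mul (P := P) (π := π) (s₀ := s₀) t fun _ => 1
    simpa only [mul_one, hkernel, stageExp_comp_state hπ, ih.2] using hmass

theorem stageExp_const (hP : ∀ n a, RowStochastic (P n a)) (hπ : IsPolicy α π) (t : ℕ) (c : ℝ) :
    stageExp P π s₀ t (fun _ _ => c) = c := by
  rw [stageExp_comp_state hπ, ← sum_mul, (isProbVec_stateDist hP hπ t).2, one_mul]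

theorem stageExp_mono (hP : ∀ n a, RowStochastic (P n a)) (hπ : IsPolicy α π) (t : ℕ)
    {f g : (∀ n, S n) → (Fin N → Bool) → ℝ} (hfg : ∀ s a, π s a ≠ 0 → f s a ≤ g s a) :
    stageExp P π s₀ t f ≤ stageExp P π s₀ t g := by
  refine sum_le_sum fun s _ => sum_le_sum fun a _ => ?_
  rcases eq_or_ne (π s a) 0 with hzero | hpos
  · simp only [hzero, mul_zero, zero_mul, le_refl]
  · exact mul_le_mul_of_nonneg_left (hfg s a hpos)
      (mul_nonneg ((isProbVec_stateDist hP hπ t).1 s) ((hπ s).1 a))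

theorem stageExp_succ_comp_arm (hP : ∀ n a, RowStochastic (P n a)) (hπ : IsPolicy α π) (t : ℕ)
    (n : Fin N) (g : S n → ℝ) :
    stageExp P π s₀ (t + 1) (fun s _ => g (s n)) =
      stageExp P π s₀ t fun s a => ∑ x, P n (a n) (s n) x * g x := by
  rw [stageExp_comp_state hπ, sum_stateDist_succ_mul]
  congr! 3 with s a
  exact sum_prod_mul_apply (fun m => (hP m (a m)).2 (s m)) n g

theorem expStageReward_eq_stageExp (r : ∀ n, S n → Bool → ℝ) (t : ℕ) :
    expStageReward P r π s₀ t = stageExp P π s₀ t (stageReward r) := by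
  simp only [expStageReward, stageExp, mul_sum, mul_assoc]

/-- The occupation measure of arm `n` at time `t`: the probability that arm `n` is in state `x` and
receives action `b`. -/
noncomputable def occupation (P : ∀ n, Bool → S n → S n → ℝ)
    (π : (∀ n, S n) → (Fin N → Bool) → ℝ) (s₀ : ∀ n, S n) (t : ℕ) (n : Fin N) (x : S n)
    (b : Bool) : ℝ :=
  stageExp P π s₀ t fun s a => if s n = x ∧ a n = b then 1 else 0

theorem sum_mul_occupation (t : ℕ) (n : Fin N) (f : S n → Bool → ℝ) :
    ∑ x, (f x false * occupation P π s₀ t n x false + f x true * occupation P π s₀ t n x true) =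
      stageExp P π s₀ t fun s a => f (s n) (a n) := by
  have hsum (s : ∀ n, S n) (a : Fin N → Bool) :
      ∑ p : S n × Bool, f p.1 p.2 * (if s n = p.1 ∧ a n = p.2 then 1 else 0) = f (s n) (a n) := by
    simp only [← Prod.mk_inj, mul_ite, mul_one, mul_zero, sum_ite_eq, mem_univ, if_true]
  calc
    _ = ∑ p : S n × Bool, f p.1 p.2 * occupation P π s₀ t n p.1 p.2 := by
      simp only [Fintype.sum_prod_type, Fintype.sum_bool, add_comm]
    _ = stageExp P π s₀ t fun s a =>
          ∑ p : S n × Bool, f p.1 p.2 * (if s n = p.1 ∧ a n = p.2 then 1 else 0) := by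
      simp only [stageExp_sum, stageExp_const_mul, occupation]
    _ = stageExp P π s₀ t fun s a => f (s n) (a n) := by simp only [hsum]

theorem isSA_occupation (hP : ∀ n a, RowStochastic (P n a)) (hπ : IsPolicy α π) (t : ℕ)
    (n : Fin N) : IsSA (occupation P π s₀ t n) := by
  constructor
  · intro x b
    rw [← stageExp_const (s₀ := s₀) hP hπ t 0]
    exact stageExp_mono hP hπ t fun s a _ => by positivity
  · simpa only [one_mul, stageExp_const hP hπ] using
      sum_mul_occupation (P := P) (π := π) (s₀ := s₀) t n fun _ _ => 1

theorem budgetFeasible_occupation (hP : ∀ n a, RowStochastic (P n a)) (hπ : IsPolicy α π) (t : ℕ) :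
    BudgetFeasible α (occupation P π s₀ t) := by
  have hactive (n : Fin N) : ∑ x, occupation P π s₀ t n x true =
      stageExp P π s₀ t fun _ a => if a n then 1 else 0 := by
    simpa using sum_mul_occupation (P := P) (π := π) (s₀ := s₀) t n fun _ b => if b then 1 else 0
  calc
    ∑ n, ∑ x, occupation P π s₀ t n x true =
        stageExp P π s₀ t fun _ a => ∑ n, if a n then 1 else 0 := by
      simp only [hactive, stageExp_sum]
    _ ≤ stageExp P π s₀ t fun _ _ => α * N := stageExp_mono hP hπ t fun s => (hπ s).2.2
    _ = N * α := by rw [stageExp_const hP hπ, mul_comm]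

theorem stateMarginal_occupation_succ (hP : ∀ n a, RowStochastic (P n a)) (hπ : IsPolicy α π)
    (t : ℕ) :
    stateMarginal (occupation P π s₀ (t + 1)) = nextMarginal P (occupation P π s₀ t) := by
  ext n x
  have hmarginal : stateMarginal (occupation P π s₀ (t + 1)) n x =
      stageExp P π s₀ (t + 1) fun s _ => if s n = x then 1 else 0 := by
    simpa [stateMarginal, sum_add_distrib] using
      sum_mul_occupation (P := P) (π := π) (s₀ := s₀) (t + 1) n fun y _ => if y = x then 1 else 0
  have hnext : nextMarginal P (occupation P π s₀ t) n x =
      stageExp P π s₀ t fun s a => P n (a n) (s n) x := by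
    rw [← sum_mul_occupation t n fun y b => P n b y x]
    simp only [nextMarginal, nextVec, LinearMap.coe_mk, AddHom.coe_mk, mul_comm]
  rw [hmarginal, hnext, stageExp_succ_comp_arm hP hπ t n fun y => if y = x then 1 else 0]
  simp only [mul_ite, mul_one, mul_zero, sum_ite_eq', mem_univ, if_true]

theorem isLPTrajectory_occupation (hP : ∀ n a, RowStochastic (P n a)) (hπ : IsPolicy α π) :
    IsLPTrajectory P α (occupation P π s₀) where
  mem_budgetPolytope t :=
    ⟨fun n _ => isSA_occupation hP hπ t n, budgetFeasible_occupation hP hπ t⟩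
  stateMarginal_succ := stateMarginal_occupation_succ hP hπ

theorem expStageReward_eq_lpReward_occupation (r : ∀ n, S n → Bool → ℝ) (t : ℕ) :
    expStageReward P r π s₀ t = lpReward r (occupation P π s₀ t) := by
  rw [expStageReward_eq_stageExp]
  unfold stageReward lpReward
  simp only [stageExp_const_mul, stageExp_sum, sum_mul_occupation]

end Policy

theorem lp_relaxation_upper_bound_general {N : ℕ} {S : Fin N → Type} [∀ n, Fintype (S n)]
    [∀ n, DecidableEq (S n)] (α : ℝ) (P : ∀ n, Bool → S n → S n → ℝ)
    (hP : ∀ n a, RowStochastic (P n a)) (r : ∀ n, S n → Bool → ℝ)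
    (π : (∀ n, S n) → (Fin N → Bool) → ℝ) (hπ : IsPolicy α π) (s₀ : ∀ n, S n) :
    limsup (fun T : ℕ => (1 / (T : ℝ)) * ∑ t ∈ range T, expStageReward P r π s₀ t) atTop ≤
      gain P r α := by
  simp only [expStageReward_eq_lpReward_occupation]
  exact (isLPTrajectory_occupation hP hπ).limsup_timeAverage_lpReward_le_gain r

/-- for every stationary randomized policy respecting the budget and every
initial joint state, the long-run average reward is bounded by the gain `g*`. -/
theorem lp_relaxation_upper_bound
    {N : ℕ} {S : Fin N → Type} [∀ n, Fintype (S n)] [∀ n, DecidableEq (S n)]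
    [∀ n, Nonempty (S n)]
    (hN : 1 ≤ N) (α : ℝ) (hα0 : 0 < α) (hα1 : α ≤ 1)
    (P : ∀ n, Bool → S n → S n → ℝ) (hP : ∀ n a, RowStochastic (P n a))
    (r : ∀ n, S n → Bool → ℝ) (hr : ∀ n s a, 0 ≤ r n s a ∧ r n s a ≤ 1)
    (π : (∀ n, S n) → (Fin N → Bool) → ℝ) (hπ : IsPolicy α π)
    (s₀ : ∀ n, S n) :
    Filter.limsup
      (fun T : ℕ => (1 / (T : ℝ)) * ∑ t ∈ Finset.range T, expStageReward P r π s₀ t)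
      Filter.atTop ≤ gain P r α := by
  exact lp_relaxation_upper_bound_general α P hP r π hπ s₀
end

section
/- For every p = (p₁,…,p_N) ∈ [0,1]^N with ∑_{n=1}^N p_n ≤ αN, there exists a probability distribution over binary vectors A = (A₁,…,A_N) ∈ {0,1}^N, supported on vectors satisfying ∑_{n=1}^N A_n ≤ αN (equivalently ∑_n A_n ≤ ⌊αN⌋), such that the marginal distortion satisfies ∑_{n=1}^N |E[A_n] − p_n| ≤ αN − ⌊αN⌋ ≤ 1; in particular (1/N)∑_{n=1}^N |E[A_n] − p_n| ≤ (αN − ⌊αN⌋)/N ≤ 1/N. -/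
open Finset Filter

/-!
The polytope `{x ∈ [0,1]^ι | ∑ i, x i ≤ K}` with `K` an integer has only `0`-`1` vertices. Around a
point with a fractional coordinate one can move in both directions without leaving the polytope:
along that coordinate if the budget constraint is slack, and by exchanging mass with a second
fractional coordinate if it is tight, a second one existing because the sum is then an integer.
Hence, by Krein–Milman, every point of the polytope is the mean of a random `0`-`1` vector that
respects the budget `K`. For a real budget `b`, first shrink `p` by the factor `⌊b⌋ / b`,
which moves it by at most `b - ⌊b⌋` in `ℓ¹`.
-/

open scoped Topology

section Convexity

variable {R E α : Type*}

lemma eq_zero_of_mem_extremePoints_of_eventually_add_smul_mem [AddCommGroup E] [Module ℝ E]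
    {s : Set E} {x d : E} (hx : x ∈ s.extremePoints ℝ)
    (hd : ∀ᶠ ε in 𝓝 (0 : ℝ), x + ε • d ∈ s) : d = 0 := by
  have hd_neg : ∀ᶠ ε in 𝓝 (0 : ℝ), x + (-ε) • d ∈ s :=
    (continuous_neg.tendsto' 0 0 neg_zero).eventually hd
  obtain ⟨ε, ⟨hplus, hminus⟩, hε⟩ :=
    (((hd.and hd_neg).filter_mono nhdsWithin_le_nhds).and
      (self_mem_nhdsWithin (s := {0}ᶜ))).exists
  have hmem : x ∈ openSegment ℝ (x + ε • d) (x + (-ε) • d) := by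
    simpa [neg_smul, ← sub_eq_add_neg] using mem_openSegment_add_sub (𝕜 := ℝ) x (ε • d)
  have hfix : x + ε • d = x := (mem_extremePoints.1 hx).2 _ hplus _ hminus hmem |>.1
  exact (smul_eq_zero.1 (add_eq_left.1 hfix)).resolve_left hε

lemma exists_mem_stdSimplex_of_mem_convexHull_image [CommRing R] [PartialOrder R]
    [IsOrderedRing R] [AddCommGroup E] [Module R E] [Fintype α] {v : α → E} {s : Set α}
    {x : E} (hx : x ∈ convexHull R (v '' s)) :
    ∃ q ∈ stdSimplex R α, (∀ a, q a ≠ 0 → a ∈ s) ∧ ∑ a, q a • v a = x := by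
  classical
  have himage : v '' s = Fintype.linearCombination R v '' ((Pi.single · 1) '' s) := by
    simp [Set.image_image]
  rw [himage, ← LinearMap.image_convexHull] at hx
  obtain ⟨q, hq, rfl⟩ := hx
  have hsub : convexHull R ((fun a ↦ (Pi.single a 1 : α → R)) '' s) ⊆
      stdSimplex R α ∩ sᶜ.pi fun _ ↦ {0} := by
    refine convexHull_min ?_
      ((convex_stdSimplex R α).inter (convex_pi fun _ _ ↦ convex_singleton 0))
    rintro _ ⟨a, ha, rfl⟩
    exact ⟨single_mem_stdSimplex R a, fun b hb ↦
      Pi.single_eq_of_ne (ne_of_mem_of_not_mem ha hb).symm 1⟩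
  obtain ⟨hq_mem, hq_zero⟩ := hsub hq
  refine ⟨q, hq_mem, fun a ha ↦ ?_, rfl⟩
  by_contra has
  exact ha (hq_zero a has)

end Convexity

lemma mem_of_sum_mem_of_forall_ne_mem {ι G : Type*} [Fintype ι] [AddCommGroup G]
    (H : AddSubgroup G) {f : ι → G} {i : ι} (hsum : ∑ j, f j ∈ H) (hne : ∀ j ≠ i, f j ∈ H) :
    f i ∈ H := by
  classical
  rw [← Finset.add_sum_erase _ _ (mem_univ i)] at hsum
  exact (H.add_mem_cancel_right (H.sum_mem fun j hj ↦ hne j (ne_of_mem_erase hj))).1 hsum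

lemma eventually_add_smul_mem_Icc {ι : Type*} [Finite ι] {l u x d : ι → ℝ}
    (hx : x ∈ Set.Icc l u) (hd : ∀ i, d i ≠ 0 → x i ∈ Set.Ioo (l i) (u i)) :
    ∀ᶠ ε in 𝓝 (0 : ℝ), x + ε • d ∈ Set.Icc l u := by
  have hcoord (i : ι) : ∀ᶠ ε in 𝓝 (0 : ℝ), x i + ε * d i ∈ Set.Icc (l i) (u i) := by
    by_cases hdi : d i = 0
    · simpa [hdi] using And.intro (hx.1 i) (hx.2 i)
    · have hlim : Tendsto (fun ε ↦ x i + ε * d i) (𝓝 0) (𝓝 (x i)) :=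
        Continuous.tendsto' (by fun_prop) _ _ (by simp)
      exact hlim.eventually (Icc_mem_nhds (hd i hdi).1 (hd i hdi).2)
  filter_upwards [eventually_all.2 hcoord] with ε hε
  exact ⟨fun i ↦ (hε i).1, fun i ↦ (hε i).2⟩

/-- The polytope of vectors in `[0, 1]^ι` whose coordinates sum to at most `c`: the fractional
selections of elements of `ι` within the budget `c`. -/
def cappedCube (ι : Type*) [Fintype ι] (c : ℝ) : Set (ι → ℝ) :=
  Set.Icc 0 1 ∩ {x | ∑ i, x i ≤ c}

/-- The `0`-`1` vector of a Boolean selection. -/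
def boolVec {ι : Type*} (A : ι → Bool) : ι → ℝ :=
  fun i ↦ if A i then 1 else 0

section CappedCube

variable {ι : Type*} [Fintype ι] {c t : ℝ} {x d : ι → ℝ} {K : ℤ}

lemma convex_cappedCube : Convex ℝ (cappedCube ι c) := by
  have hlin : IsLinearMap ℝ fun x : ι → ℝ ↦ ∑ i, x i :=
    ⟨fun x y ↦ sum_add_distrib, fun a x ↦ (mul_sum _ _ _).symm⟩
  exact (convex_Icc 0 1).inter (convex_halfSpace_le hlin c)

lemma isCompact_cappedCube : IsCompact (cappedCube ι c) :=
  isCompact_Icc.inter_right (isClosed_le (by fun_prop) continuous_const)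

lemma smul_mem_cappedCube (ht₀ : 0 ≤ t) (ht₁ : t ≤ 1) (hx : x ∈ cappedCube ι c) :
    t • x ∈ cappedCube ι (t * c) := by
  obtain ⟨⟨hx₀, hx₁⟩, hsum⟩ := hx
  refine ⟨⟨smul_nonneg ht₀ hx₀, fun i ↦ mul_le_one₀ ht₁ (hx₀ i) (hx₁ i)⟩, ?_⟩
  calc ∑ i, t * x i = t * ∑ i, x i := (mul_sum _ _ _).symm
    _ ≤ t * c := mul_le_mul_of_nonneg_left hsum ht₀

lemma sum_abs_smul_sub_self (ht₁ : t ≤ 1) (hx₀ : 0 ≤ x) :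
    ∑ i, |(t • x) i - x i| = (1 - t) * ∑ i, x i := by
  rw [mul_sum]
  refine sum_congr rfl fun i _ ↦ ?_
  have hfactor : (t • x) i - x i = -((1 - t) * x i) := by
    simp only [Pi.smul_apply, smul_eq_mul]
    ring
  rw [hfactor, abs_neg, abs_of_nonneg (mul_nonneg (sub_nonneg.2 ht₁) (hx₀ i))]

lemma eventually_add_smul_mem_cappedCube (hx : x ∈ cappedCube ι c)
    (hd : ∀ i, d i ≠ 0 → x i ∈ Set.Ioo (0 : ℝ) 1) (hsum : ∑ i, x i < c ∨ ∑ i, d i = 0) :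
    ∀ᶠ ε in 𝓝 (0 : ℝ), x + ε • d ∈ cappedCube ι c := by
  refine (eventually_add_smul_mem_Icc hx.1 hd).and ?_
  have hsum_add (ε : ℝ) : ∑ i, (x + ε • d) i = ∑ i, x i + ε * ∑ i, d i := by
    simp [sum_add_distrib, mul_sum]
  simp only [Set.mem_ofPred_eq, hsum_add]
  rcases hsum with hslack | hzero
  · have hlim : Tendsto (fun ε ↦ ∑ i, x i + ε * ∑ i, d i) (𝓝 0) (𝓝 (∑ i, x i)) :=
      Continuous.tendsto' (by fun_prop) _ _ (by simp)
    exact hlim.eventually (Iic_mem_nhds hslack)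
  · simpa [hzero] using hx.2

lemma exists_ne_mem_Ioo_of_sum_eq_intCast (hx : x ∈ Set.Icc 0 1) (hsum : ∑ i, x i = K) {i : ι}
    (hi : x i ∈ Set.Ioo (0 : ℝ) 1) : ∃ j ≠ i, x j ∈ Set.Ioo (0 : ℝ) 1 := by
  by_contra! hnone
  have hint : ∀ j ≠ i, x j ∈ (Int.castAddHom ℝ).range := by
    intro j hj
    rcases (hx.1 j).eq_or_lt with h₀ | h₀
    · exact ⟨0, by simpa using h₀⟩
    · have h₁ : x j = 1 := le_antisymm (hx.2 j) (not_lt.1 fun h ↦ hnone j hj ⟨h₀, h⟩)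
      exact ⟨1, by simp [h₁]⟩
  obtain ⟨z, hz : (z : ℝ) = x i⟩ :=
    mem_of_sum_mem_of_forall_ne_mem (Int.castAddHom ℝ).range ⟨K, hsum.symm⟩ hint
  rw [← hz] at hi
  have hz₀ : 0 < z := by exact_mod_cast hi.1
  have hz₁ : z < 1 := by exact_mod_cast hi.2
  omega

lemma notMem_Ioo_of_mem_extremePoints_cappedCube (hx : x ∈ (cappedCube ι K).extremePoints ℝ)
    (i : ι) : x i ∉ Set.Ioo (0 : ℝ) 1 := by
  classical
  intro hi
  have hxmem := extremePoints_subset hx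
  suffices ∃ d : ι → ℝ, d i = 1 ∧ (∀ k, d k ≠ 0 → x k ∈ Set.Ioo (0 : ℝ) 1) ∧
      (∑ k, x k < K ∨ ∑ k, d k = 0) by
    obtain ⟨d, hdi, hd, hsum⟩ := this
    have hzero := eq_zero_of_mem_extremePoints_of_eventually_add_smul_mem hx
      (eventually_add_smul_mem_cappedCube hxmem hd hsum)
    simp [hzero] at hdi
  have hbudget : ∑ k, x k ≤ K := hxmem.2
  rcases hbudget.lt_or_eq with hslack | htight
  · refine ⟨Pi.single i 1, by simp, fun k hk ↦ ?_, .inl hslack⟩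
    obtain rfl : k = i := by_contra fun hki ↦ hk (Pi.single_eq_of_ne hki 1)
    exact hi
  · obtain ⟨j, hji, hj⟩ := exists_ne_mem_Ioo_of_sum_eq_intCast hxmem.1 htight hi
    refine ⟨Pi.single i 1 - Pi.single j 1, by simp [hji.symm], fun k hk ↦ ?_, .inr (by simp)⟩
    by_cases hki : k = i
    · exact hki ▸ hi
    · obtain rfl : k = j := by_contra fun hkj ↦ hk (by simp [hki, hkj])
      exact hj

lemma extremePoints_cappedCube_subset :
    (cappedCube ι K).extremePoints ℝ ⊆ boolVec '' {A : ι → Bool | ∑ i, boolVec A i ≤ K} := by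
  intro x hx
  obtain ⟨⟨hx₀, hx₁⟩, hsum⟩ := extremePoints_subset hx
  have hbool : boolVec (fun i ↦ decide (0 < x i)) = x := by
    funext i
    rcases (hx₀ i).eq_or_lt with h₀ | h₀
    · simp [boolVec, ← h₀]
    · have h₁ : x i = 1 := le_antisymm (hx₁ i)
        (not_lt.1 fun h ↦ notMem_Ioo_of_mem_extremePoints_cappedCube hx i ⟨h₀, h⟩)
      simp [boolVec, h₁]
  exact ⟨_, by rwa [Set.mem_ofPred_eq, hbool], hbool⟩

lemma cappedCube_subset_convexHull :
    cappedCube ι K ⊆ convexHull ℝ (boolVec '' {A : ι → Bool | ∑ i, boolVec A i ≤ K}) := by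
  rw [← closure_convexHull_extremePoints isCompact_cappedCube convex_cappedCube]
  exact closure_minimal (convexHull_mono extremePoints_cappedCube_subset)
    (((Set.toFinite _).image _).isClosed_convexHull ℝ)

lemma exists_mem_stdSimplex_sum_mul_boolVec_eq [DecidableEq ι] (hx : x ∈ cappedCube ι K) :
    ∃ q ∈ stdSimplex ℝ (ι → Bool), (∀ A, q A ≠ 0 → ∑ i, boolVec A i ≤ K) ∧
      ∀ i, ∑ A, q A * boolVec A i = x i := by
  obtain ⟨q, hq, hbudget, hmean⟩ :=
    exists_mem_stdSimplex_of_mem_convexHull_image (cappedCube_subset_convexHull hx)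
  exact ⟨q, hq, hbudget, fun i ↦ by simpa using congrFun hmean i⟩

end CappedCube

theorem randomized_rounding_general {ι : Type*} [Fintype ι] [DecidableEq ι] {b : ℝ} {p : ι → ℝ}
    (hp : p ∈ cappedCube ι b) :
    ∃ q ∈ stdSimplex ℝ (ι → Bool), (∀ A, q A ≠ 0 → ∑ i, boolVec A i ≤ ⌊b⌋) ∧
      ∑ i, |∑ A, q A * boolVec A i - p i| ≤ b - ⌊b⌋ := by
  have hb : 0 ≤ b := (sum_nonneg fun i _ ↦ hp.1.1 i).trans hp.2
  set t : ℝ := ⌊b⌋ / b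
  have ht₀ : 0 ≤ t := div_nonneg (by exact_mod_cast Int.floor_nonneg.2 hb) hb
  have ht₁ : t ≤ 1 := div_le_one_of_le₀ (Int.floor_le b) hb
  have htb : t * b = ⌊b⌋ := div_mul_cancel_of_imp fun hb₀ ↦ by simp [hb₀]
  obtain ⟨q, hq, hbudget, hmean⟩ :=
    exists_mem_stdSimplex_sum_mul_boolVec_eq (htb ▸ smul_mem_cappedCube ht₀ ht₁ hp)
  refine ⟨q, hq, hbudget, ?_⟩
  calc ∑ i, |∑ A, q A * boolVec A i - p i|
    _ = ∑ i, |(t • p) i - p i| := by simp only [hmean]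
    _ = (1 - t) * ∑ i, p i := sum_abs_smul_sub_self ht₁ hp.1.1
    _ ≤ (1 - t) * b := mul_le_mul_of_nonneg_left hp.2 (sub_nonneg.2 ht₁)
    _ = b - ⌊b⌋ := by rw [sub_mul, one_mul, htb]

/-- guarantee of the randomized rounding procedure. -/
theorem randomized_rounding
    (N : ℕ) (hN : 1 ≤ N) (α : ℝ) (hα0 : 0 < α) (hα1 : α ≤ 1)
    (p : Fin N → ℝ) (hp : ∀ n, 0 ≤ p n ∧ p n ≤ 1)
    (hpsum : (∑ n, p n) ≤ α * N) :
    ∃ q : (Fin N → Bool) → ℝ,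
      (∀ A, 0 ≤ q A) ∧ (∑ A : Fin N → Bool, q A) = 1 ∧
      (∀ A : Fin N → Bool, q A ≠ 0 →
        (∑ n, (if A n then (1 : ℝ) else 0)) ≤ α * N) ∧
      (∀ A : Fin N → Bool, q A ≠ 0 →
        (∑ n, (if A n then (1 : ℝ) else 0)) ≤ (⌊α * (N : ℝ)⌋ : ℝ)) ∧
      (∑ n, |(∑ A : Fin N → Bool, q A * (if A n then (1 : ℝ) else 0)) - p n|)
        ≤ α * N - (⌊α * (N : ℝ)⌋ : ℝ) ∧
      α * N - (⌊α * (N : ℝ)⌋ : ℝ) ≤ 1 ∧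
      (1 / (N : ℝ)) *
          (∑ n, |(∑ A : Fin N → Bool, q A * (if A n then (1 : ℝ) else 0)) - p n|)
        ≤ (α * N - (⌊α * (N : ℝ)⌋ : ℝ)) / N ∧
      (α * N - (⌊α * (N : ℝ)⌋ : ℝ)) / N ≤ 1 / (N : ℝ) := by
  obtain ⟨q, ⟨hq_nonneg, hq_sum⟩, hbudget, hdist⟩ := randomized_rounding_general (b := α * N)
    ⟨⟨fun n ↦ (hp n).1, fun n ↦ (hp n).2⟩, hpsum⟩
  have hfract : α * N - ⌊α * (N : ℝ)⌋ ≤ 1 := (Int.fract_lt_one _).le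
  exact ⟨q, hq_nonneg, hq_sum, fun A hA ↦ (hbudget A hA).trans (Int.floor_le _), hbudget, hdist,
    hfract, by rw [one_div_mul_eq_div]; gcongr; exact hdist, by gcongr⟩
end
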